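/- arXiv:2408.07868 — 4 statements merged into one kernel-verified Lean document; each statement's English description precedes it below -/
import Mathlib

section
/- Suppose Φ : ℝ³ × ℂ → ℂ is smooth as a function of (x₁,x₂,x₃,Re λ,Im λ) and s : ℂ × ℝ → ℂ is such that s(λ,·) is differentiable for every λ ∈ ℂ. Assume (i) 𝓜_λΦ(·,λ) = 0 on ℝ³ for every λ ∈ ℂ; (ii) ∂_{λ̄}Φ(x,λ) = s(λ,x₃)·Φ(x,λ̄) for every x ∈ ℝ³ and λ ∈ ℂ; (iii) for every λ ∈ ℂ and every t ∈ ℝ there exists x ∈ ℝ³ with x₃ = t and Φ(x,λ̄) ≠ 0. Then the continuous scattering data evolves linearly: s(λ,x₃) = e^{(λ̄³−λ³)x₃}·s(λ,0) for all λ ∈ ℂ and all x₃ ∈ ℝ. -/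
open Complex MeasureTheory

noncomputable section

/-- Partial derivative in the first coordinate of `ℝ³ = ℝ × ℝ × ℝ`. -/
def p1 {E : Type*} [NormedAddCommGroup E] [NormedSpace ℝ E]
    (f : ℝ × ℝ × ℝ → E) (x : ℝ × ℝ × ℝ) : E :=
  deriv (fun t => f (t, x.2.1, x.2.2)) x.1

/-- Partial derivative in the second coordinate. -/
def p2 {E : Type*} [NormedAddCommGroup E] [NormedSpace ℝ E]
    (f : ℝ × ℝ × ℝ → E) (x : ℝ × ℝ × ℝ) : E :=
  deriv (fun t => f (x.1, t, x.2.2)) x.2.1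

/-- Partial derivative in the third coordinate. -/
def p3 {E : Type*} [NormedAddCommGroup E] [NormedSpace ℝ E]
    (f : ℝ × ℝ × ℝ → E) (x : ℝ × ℝ × ℝ) : E :=
  deriv (fun t => f (x.1, x.2.1, t)) x.2.2

/-- The Wirtinger derivative `∂_{λ̄} = (1/2)(∂_{λ_R} + i ∂_{λ_I})`. -/
def dbar (f : ℂ → ℂ) (l : ℂ) : ℂ :=
  (1 / 2) * (deriv (fun t : ℝ => f ⟨t, l.im⟩) l.re
    + Complex.I * deriv (fun t : ℝ => f ⟨l.re, t⟩) l.im)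

/-- The operator `𝓜_λΦ = −∂_{x₃}Φ + ∂³_{x₁}Φ + (3/2)u∂_{x₁}Φ + (3/4)(∂_{x₁}u)Φ
  + (3/4)wΦ − λ³Φ`. -/
def Mop (u w : ℝ × ℝ × ℝ → ℝ) (lam : ℂ) (Φ : ℝ × ℝ × ℝ → ℂ) (x : ℝ × ℝ × ℝ) : ℂ :=
  - p3 Φ x + p1 (p1 (p1 Φ)) x + (3 / 2 : ℂ) * (u x : ℂ) * p1 Φ x
    + (3 / 4 : ℂ) * (Complex.ofReal (p1 u x)) * Φ x + (3 / 4 : ℂ) * (w x : ℂ) * Φ x - lam ^ 3 * Φ x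

/-!
The potentials of `𝓜_λ` do not depend on `λ` and `λ³` is holomorphic, so `∂_{λ̄}` commutes with
`𝓜_λ` and `∂_{λ̄}Φ(·, λ)` again lies in the kernel of `𝓜_λ`. By hypothesis this function is
`s(λ, x₃) Φ(·, λ̄)`, while `Φ(·, λ̄)` lies in the kernel of `𝓜_{λ̄}`. The factor `s` is constant in
`x₁`, so comparing the two equations leaves
`∂_{x₃}(∂_{λ̄}Φ) = s ∂_{x₃}Φ(·, λ̄) + (λ̄³ - λ³) s Φ(·, λ̄)`, and the quotient rule applied to
`s = ∂_{λ̄}Φ(·, λ) / Φ(·, λ̄)` yields the linear equation `∂_{x₃}s = (λ̄³ - λ³) s`.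
-/

lemma hasDerivAt_of_hasDerivAt_mul {𝕜 𝕜' : Type*} [NontriviallyNormedField 𝕜]
    [NontriviallyNormedField 𝕜'] [NormedAlgebra 𝕜 𝕜'] {s g : 𝕜 → 𝕜'} {s' g' : 𝕜'} {t : 𝕜}
    (hsg : HasDerivAt (fun τ => s τ * g τ) (s' * g t + s t * g') t) (hg : HasDerivAt g g' t)
    (hg_ne : g t ≠ 0) : HasDerivAt s s' t := by
  have hs : s =ᶠ[nhds t] fun τ => s τ * g τ / g τ := by
    filter_upwards [hg.continuousAt.eventually_ne hg_ne] with τ hτ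
    rw [mul_div_cancel_right₀ _ hτ]
  refine ((hsg.fun_div hg hg_ne).congr_of_eventuallyEq hs).congr_deriv ?_
  field_simp
  ring

lemma eq_exp_smul_of_hasDerivAt_smul {E : Type*} [NormedAddCommGroup E] [NormedSpace ℂ E]
    {s : ℝ → E} {k : ℂ} (hs : ∀ t, HasDerivAt s (k • s t) t) (t : ℝ) :
    s t = exp (k * t) • s 0 := by
  have h_exp (t : ℝ) : HasDerivAt (fun τ : ℝ => exp (-k * τ)) (exp (-k * t) * (-k)) t := by
    simpa using (ofRealCLM.hasDerivAt.const_mul (-k)).cexp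
  have h_zero (t : ℝ) : HasDerivAt (fun τ : ℝ => exp (-k * τ) • s τ) 0 t := by
    refine ((h_exp t).smul (hs t)).congr_deriv ?_
    module
  have h_const : exp (-k * t) • s t = s 0 := by
    simpa using is_const_of_deriv_eq_zero (fun τ => (h_zero τ).differentiableAt)
      (fun τ => (h_zero τ).deriv) t 0
  rw [← h_const, smul_smul, ← exp_add]
  simp

section LineDeriv

variable {𝕜 E F : Type*} [NontriviallyNormedField 𝕜] [NormedAddCommGroup E] [NormedSpace 𝕜 E]
  [NormedAddCommGroup F] [NormedSpace 𝕜 F]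

lemma lineDeriv_eq_fderiv_of_differentiable {f : E → F} (hf : Differentiable 𝕜 f) (v : E) :
    (fun x => lineDeriv 𝕜 f x v) = fun x => fderiv 𝕜 f x v :=
  funext fun x => (hf x).lineDeriv_eq_fderiv

lemma contDiff_lineDeriv {n : WithTop ℕ∞} {f : E → F} (hf : ContDiff 𝕜 (n + 1) f) (v : E) :
    ContDiff 𝕜 n fun x => lineDeriv 𝕜 f x v := by
  rw [lineDeriv_eq_fderiv_of_differentiable (hf.differentiable (by simp)) v]
  exact (hf.fderiv_right le_rfl).clm_apply contDiff_const

lemma lineDeriv_lineDeriv_comm [IsRCLikeNormedField 𝕜] {f : E → F} (hf : ContDiff 𝕜 2 f)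
    (x v w : E) :
    lineDeriv 𝕜 (fun y => lineDeriv 𝕜 f y v) x w =
      lineDeriv 𝕜 (fun y => lineDeriv 𝕜 f y w) x v := by
  have hf' : Differentiable 𝕜 (fderiv 𝕜 f) :=
    (hf.fderiv_right (m := 1) le_rfl).differentiable one_ne_zero
  have second_lineDeriv (v w : E) :
      lineDeriv 𝕜 (fun y => lineDeriv 𝕜 f y v) x w = fderiv 𝕜 (fderiv 𝕜 f) x w v := by
    rw [lineDeriv_eq_fderiv_of_differentiable (hf.differentiable two_ne_zero)]
    simpa using
      (((hf' x).hasFDerivAt.clm_apply (hasFDerivAt_const v x)).hasLineDerivAt w).lineDeriv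
  rw [second_lineDeriv, second_lineDeriv]
  exact hf.contDiffAt.isSymmSndFDerivAt (by simp) w v

end LineDeriv

section CoordinateDerivatives

variable {E : Type*} [NormedAddCommGroup E] [NormedSpace ℝ E]

lemma p1_eq_lineDeriv (f : ℝ × ℝ × ℝ → E) :
    p1 f = fun x => lineDeriv ℝ f x (1, 0, 0) := by
  ext x
  simpa [p1, lineDeriv, Prod.add_def] using
    (deriv_comp_const_add (fun t => f (t, x.2.1, x.2.2)) x.1 0).symm

lemma p3_eq_lineDeriv (f : ℝ × ℝ × ℝ → E) :
    p3 f = fun x => lineDeriv ℝ f x (0, 0, 1) := by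
  ext x
  simpa [p3, lineDeriv, Prod.add_def] using
    (deriv_comp_const_add (fun t => f (x.1, x.2.1, t)) x.2.2 0).symm

lemma p1_mul_of_x3 (s : ℝ → ℂ) (f : ℝ × ℝ × ℝ → ℂ) :
    p1 (fun x => s x.2.2 * f x) = fun x => s x.2.2 * p1 f x := by
  ext x
  exact deriv_const_mul_field (s x.2.2)

lemma hasDerivAt_p3 {f : ℝ × ℝ × ℝ → E} (hf : Differentiable ℝ f) (x : ℝ × ℝ × ℝ) :
    HasDerivAt (fun t => f (x.1, x.2.1, t)) (p3 f x) x.2.2 := by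
  have h_diff : Differentiable ℝ fun t => f (x.1, x.2.1, t) := by fun_prop
  exact (h_diff x.2.2).hasDerivAt

end CoordinateDerivatives

section Dbar

lemma dbar_eq_lineDeriv (f : ℂ → ℂ) (l : ℂ) :
    dbar f l = 1 / 2 * (lineDeriv ℝ f l 1 + I * lineDeriv ℝ f l I) := by
  have h_re : lineDeriv ℝ f l 1 = deriv (fun t : ℝ => f ⟨t, l.im⟩) l.re := by
    rw [← add_zero l.re, ← deriv_comp_const_add, lineDeriv]
    congr! 3 with t
    apply Complex.ext <;> simp
  have h_im : lineDeriv ℝ f l I = deriv (fun t : ℝ => f ⟨l.re, t⟩) l.im := by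
    rw [← add_zero l.im, ← deriv_comp_const_add, lineDeriv]
    congr! 3 with t
    apply Complex.ext <;> simp
  rw [dbar, h_re, h_im]

lemma dbar_eq_fderiv {f : ℂ → ℂ} {l : ℂ} (hf : DifferentiableAt ℝ f l) :
    dbar f l = 1 / 2 * (fderiv ℝ f l 1 + I * fderiv ℝ f l I) := by
  rw [dbar_eq_lineDeriv, hf.lineDeriv_eq_fderiv, hf.lineDeriv_eq_fderiv]

lemma dbar_add {f g : ℂ → ℂ} {l : ℂ} (hf : DifferentiableAt ℝ f l)
    (hg : DifferentiableAt ℝ g l) :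
    dbar (fun ν => f ν + g ν) l = dbar f l + dbar g l := by
  rw [dbar_eq_fderiv (hf.fun_add hg), dbar_eq_fderiv hf, dbar_eq_fderiv hg, fderiv_fun_add hf hg]
  simp only [add_apply]
  ring

lemma dbar_sub {f g : ℂ → ℂ} {l : ℂ} (hf : DifferentiableAt ℝ f l)
    (hg : DifferentiableAt ℝ g l) :
    dbar (fun ν => f ν - g ν) l = dbar f l - dbar g l := by
  rw [dbar_eq_fderiv (hf.fun_sub hg), dbar_eq_fderiv hf, dbar_eq_fderiv hg, fderiv_fun_sub hf hg]
  simp only [sub_apply]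
  ring

lemma dbar_eq_zero_of_differentiableAt {h : ℂ → ℂ} {l : ℂ} (hh : DifferentiableAt ℂ h l) :
    dbar h l = 0 := by
  have cauchy_riemann : fderiv ℂ h l I = I * fderiv ℂ h l 1 := by
    rw [← smul_eq_mul, ← map_smul, smul_eq_mul, mul_one]
  rw [dbar_eq_fderiv (hh.restrictScalars ℝ), hh.fderiv_restrictScalars ℝ]
  simp only [ContinuousLinearMap.coe_restrictScalars', cauchy_riemann]
  linear_combination (1 / 2) * fderiv ℂ h l 1 * I_sq

lemma dbar_mul {f g : ℂ → ℂ} {l : ℂ} (hf : DifferentiableAt ℝ f l)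
    (hg : DifferentiableAt ℝ g l) :
    dbar (fun ν => f ν * g ν) l = f l * dbar g l + dbar f l * g l := by
  rw [dbar_eq_fderiv (hf.fun_mul hg), dbar_eq_fderiv hf, dbar_eq_fderiv hg, fderiv_fun_mul hf hg]
  simp only [add_apply, smul_apply, smul_eq_mul]
  ring

lemma dbar_mul_of_holomorphic {h f : ℂ → ℂ} {l : ℂ} (hh : DifferentiableAt ℂ h l)
    (hf : DifferentiableAt ℝ f l) : dbar (fun ν => h ν * f ν) l = h l * dbar f l := by
  rw [dbar_mul (hh.restrictScalars ℝ) hf, dbar_eq_zero_of_differentiableAt hh, zero_mul, add_zero]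

lemma dbar_const_mul (c : ℂ) {f : ℂ → ℂ} {l : ℂ} (hf : DifferentiableAt ℝ f l) :
    dbar (fun ν => c * f ν) l = c * dbar f l :=
  dbar_mul_of_holomorphic (differentiableAt_const c) hf

end Dbar

section Families

variable {E : Type*} [NormedAddCommGroup E] [NormedSpace ℝ E]

lemma lineDeriv_section_eq (Φ : E → ℂ → ℂ) (v x : E) (l : ℂ) :
    lineDeriv ℝ (fun y => Φ y l) x v = lineDeriv ℝ (Function.uncurry Φ) (x, l) (v, 0) := by
  simp [lineDeriv]

lemma dbar_section_eq (Φ : E → ℂ → ℂ) (x : E) (l : ℂ) :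
    dbar (Φ x) l = 1 / 2 * (lineDeriv ℝ (Function.uncurry Φ) (x, l) (0, 1)
      + I * lineDeriv ℝ (Function.uncurry Φ) (x, l) (0, I)) := by
  simp [dbar_eq_lineDeriv, lineDeriv]

lemma contDiff_lineDeriv_section {n : WithTop ℕ∞} {Φ : E → ℂ → ℂ}
    (hΦ : ContDiff ℝ (n + 1) (Function.uncurry Φ)) (v : E) :
    ContDiff ℝ n (Function.uncurry fun x l => lineDeriv ℝ (fun y => Φ y l) x v) := by
  simp only [lineDeriv_section_eq]
  exact contDiff_lineDeriv hΦ (v, 0)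

lemma contDiff_dbar_section {n : WithTop ℕ∞} {Φ : E → ℂ → ℂ}
    (hΦ : ContDiff ℝ (n + 1) (Function.uncurry Φ)) (l : ℂ) :
    ContDiff ℝ n fun x => dbar (Φ x) l := by
  have h_joint (v : E × ℂ) : ContDiff ℝ n fun x => lineDeriv ℝ (Function.uncurry Φ) (x, l) v :=
    (contDiff_lineDeriv hΦ v).comp (contDiff_prodMk_left l)
  simp only [dbar_section_eq]
  exact contDiff_const.mul ((h_joint _).add (contDiff_const.mul (h_joint _)))

lemma dbar_lineDeriv_comm {Φ : E → ℂ → ℂ} (hΦ : ContDiff ℝ 2 (Function.uncurry Φ))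
    (v x : E) (l : ℂ) :
    dbar (fun ν => lineDeriv ℝ (fun y => Φ y ν) x v) l =
      lineDeriv ℝ (fun y => dbar (Φ y) l) x v := by
  let L (w q : E × ℂ) : ℂ := lineDeriv ℝ (Function.uncurry Φ) q w
  have h_swap (w : E × ℂ) : HasDerivAt (fun t : ℝ => L w (x + t • v, l))
      (lineDeriv ℝ (L (v, 0)) (x, l) w) 0 := by
    have hL : Differentiable ℝ (L w) :=
      (contDiff_lineDeriv (n := 1) hΦ w).differentiable one_ne_zero
    have h : HasLineDerivAt ℝ (L w) (lineDeriv ℝ (L w) (x, l) (v, 0)) (x, l) (v, 0) :=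
      (hL (x, l)).lineDifferentiableAt.hasLineDerivAt
    rw [lineDeriv_lineDeriv_comm hΦ]
    simpa [HasLineDerivAt] using h
  have h_sum := ((h_swap (0, 1)).fun_add ((h_swap (0, I)).const_mul I)).const_mul (1 / 2)
  simp only [lineDeriv_section_eq Φ, dbar_section_eq Φ]
  exact (dbar_section_eq (fun y ν => L (v, 0) (y, ν)) x l).trans h_sum.deriv.symm

end Families

section EvolutionOperator

/-- The part `∂³_{x₁} + a ∂_{x₁} + b - ∂_{x₃}` of the Lax operator that does not depend on the
spectral parameter, with arbitrary complex potentials `a` and `b`. The operator `𝓜_λ` is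
`evolutionOp a b - λ³` for `a = (3/2)u` and `b = (3/4)(∂_{x₁}u + w)`. -/
def evolutionOp (a b : ℝ × ℝ × ℝ → ℂ) (f : ℝ × ℝ × ℝ → ℂ) (x : ℝ × ℝ × ℝ) : ℂ :=
  p1 (p1 (p1 f)) x + a x * p1 f x + b x * f x - p3 f x

lemma Mop_eq_zero_iff {u w : ℝ × ℝ × ℝ → ℝ} {l : ℂ} {f : ℝ × ℝ × ℝ → ℂ} {x : ℝ × ℝ × ℝ} :
    Mop u w l f x = 0 ↔
      evolutionOp (fun y => 3 / 2 * u y) (fun y => 3 / 4 * (p1 u y + w y)) f x = l ^ 3 * f x := by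
  rw [Mop, evolutionOp]
  constructor <;> intro h <;> linear_combination h

/-- `∂_{x₃}` of the product stays unexpanded, since the equation is later solved for it. -/
lemma evolutionOp_mul_of_x3 (a b f : ℝ × ℝ × ℝ → ℂ) (s : ℝ → ℂ) (x : ℝ × ℝ × ℝ) :
    evolutionOp a b (fun y => s y.2.2 * f y) x =
      s x.2.2 * (evolutionOp a b f x + p3 f x) - p3 (fun y => s y.2.2 * f y) x := by
  simp only [evolutionOp, p1_mul_of_x3]
  ring

variable {Φ : ℝ × ℝ × ℝ → ℂ → ℂ}

lemma contDiff_p1_section {n : WithTop ℕ∞} (hΦ : ContDiff ℝ (n + 1) (Function.uncurry Φ)) :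
    ContDiff ℝ n (Function.uncurry fun x l => p1 (fun y => Φ y l) x) := by
  simpa only [p1_eq_lineDeriv] using contDiff_lineDeriv_section hΦ _

lemma contDiff_p3_section {n : WithTop ℕ∞} (hΦ : ContDiff ℝ (n + 1) (Function.uncurry Φ)) :
    ContDiff ℝ n (Function.uncurry fun x l => p3 (fun y => Φ y l) x) := by
  simpa only [p3_eq_lineDeriv] using contDiff_lineDeriv_section hΦ _

lemma dbar_p1_comm (hΦ : ContDiff ℝ 2 (Function.uncurry Φ)) (x : ℝ × ℝ × ℝ) (l : ℂ) :
    dbar (fun ν => p1 (fun y => Φ y ν) x) l = p1 (fun y => dbar (Φ y) l) x := by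
  simpa only [p1_eq_lineDeriv] using dbar_lineDeriv_comm hΦ _ x l

lemma dbar_p3_comm (hΦ : ContDiff ℝ 2 (Function.uncurry Φ)) (x : ℝ × ℝ × ℝ) (l : ℂ) :
    dbar (fun ν => p3 (fun y => Φ y ν) x) l = p3 (fun y => dbar (Φ y) l) x := by
  simpa only [p3_eq_lineDeriv] using dbar_lineDeriv_comm hΦ _ x l

lemma dbar_p1_p1_p1_comm (hΦ : ContDiff ℝ 4 (Function.uncurry Φ)) (x : ℝ × ℝ × ℝ) (l : ℂ) :
    dbar (fun ν => p1 (p1 (p1 fun y => Φ y ν)) x) l = p1 (p1 (p1 fun y => dbar (Φ y) l)) x := by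
  have hΦ₁ : ContDiff ℝ 3 (Function.uncurry fun y ν => p1 (fun z => Φ z ν) y) :=
    contDiff_p1_section hΦ
  have hΦ₂ : ContDiff ℝ 2 (Function.uncurry fun y ν => p1 (p1 fun z => Φ z ν) y) :=
    contDiff_p1_section hΦ₁
  rw [dbar_p1_comm hΦ₂]
  simp only [dbar_p1_comm (hΦ₁.of_le (by norm_num)), dbar_p1_comm (hΦ.of_le (by norm_num))]

lemma dbar_evolutionOp_comm (hΦ : ContDiff ℝ 4 (Function.uncurry Φ)) (a b : ℝ × ℝ × ℝ → ℂ)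
    (x : ℝ × ℝ × ℝ) (l : ℂ) :
    dbar (fun ν => evolutionOp a b (fun y => Φ y ν) x) l =
      evolutionOp a b (fun y => dbar (Φ y) l) x := by
  have diff_section {Ψ : ℝ × ℝ × ℝ → ℂ → ℂ} (hΨ : ContDiff ℝ 1 (Function.uncurry Ψ)) :
      DifferentiableAt ℝ (Ψ x) l :=
    ((hΨ.comp (contDiff_prodMk_right x)).differentiable one_ne_zero) l
  have h₀ := diff_section (hΦ.of_le (by norm_num))
  have h₁ := diff_section (contDiff_p1_section (n := 3) hΦ |>.of_le (by norm_num))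
  have h₁₁₁ := diff_section (contDiff_p1_section (n := 1) <|
    contDiff_p1_section (n := 2) <| contDiff_p1_section (n := 3) hΦ)
  have h₃ := diff_section (contDiff_p3_section (n := 3) hΦ |>.of_le (by norm_num))
  have hΦ_two : ContDiff ℝ 2 (Function.uncurry Φ) := hΦ.of_le (by norm_num)
  simp only [evolutionOp]
  rw [dbar_sub ((h₁₁₁.fun_add (h₁.const_mul _)).fun_add (h₀.const_mul _)) h₃,
    dbar_add (h₁₁₁.fun_add (h₁.const_mul _)) (h₀.const_mul _),
    dbar_add h₁₁₁ (h₁.const_mul _), dbar_const_mul _ h₁, dbar_const_mul _ h₀,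
    dbar_p1_p1_p1_comm hΦ, dbar_p1_comm hΦ_two, dbar_p3_comm hΦ_two]

lemma evolutionOp_dbar_eq (hΦ : ContDiff ℝ 4 (Function.uncurry Φ)) {a b : ℝ × ℝ × ℝ → ℂ}
    {p : ℂ → ℂ} {l : ℂ} (hp : DifferentiableAt ℂ p l) {x : ℝ × ℝ × ℝ}
    (hLax : ∀ ν, evolutionOp a b (fun y => Φ y ν) x = p ν * Φ x ν) :
    evolutionOp a b (fun y => dbar (Φ y) l) x = p l * dbar (Φ x) l := by
  have hΦx : Differentiable ℝ (Φ x) :=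
    (hΦ.comp (contDiff_prodMk_right x)).differentiable (by norm_num)
  rw [← dbar_evolutionOp_comm hΦ, funext hLax, dbar_mul_of_holomorphic hp (hΦx l)]

end EvolutionOperator

section ScatteringData

lemma hasDerivAt_scattering_data {a b : ℝ × ℝ × ℝ → ℂ} {p : ℂ → ℂ} {Φ : ℝ × ℝ × ℝ → ℂ → ℂ}
    (hΦ : ContDiff ℝ 4 (Function.uncurry Φ)) {s : ℝ → ℂ} {l μ : ℂ}
    (hp : DifferentiableAt ℂ p l) {x : ℝ × ℝ × ℝ}
    (hLax : ∀ ν, evolutionOp a b (fun y => Φ y ν) x = p ν * Φ x ν)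
    (hdbar : ∀ y, dbar (Φ y) l = s y.2.2 * Φ y μ) (hx : Φ x μ ≠ 0) :
    HasDerivAt s ((p μ - p l) * s x.2.2) x.2.2 := by
  have hdbar_diff : Differentiable ℝ fun y => dbar (Φ y) l :=
    (contDiff_dbar_section (n := 3) hΦ l).differentiable three_ne_zero
  have hΦ_diff : Differentiable ℝ fun y => Φ y μ :=
    (hΦ.comp (contDiff_prodMk_left μ)).differentiable four_ne_zero
  have h_eigen := evolutionOp_dbar_eq hΦ hp hLax
  simp only [hdbar] at h_eigen hdbar_diff
  rw [evolutionOp_mul_of_x3, hLax μ] at h_eigen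
  have h_p3 : p3 (fun y => s y.2.2 * Φ y μ) x =
      (p μ - p l) * s x.2.2 * Φ x μ + s x.2.2 * p3 (fun y => Φ y μ) x := by
    linear_combination -h_eigen
  have h_mul := h_p3 ▸ hasDerivAt_p3 hdbar_diff x
  exact hasDerivAt_of_hasDerivAt_mul h_mul (hasDerivAt_p3 hΦ_diff x) hx

theorem continuous_scattering_data_evolves_linearly_general {a b : ℝ × ℝ × ℝ → ℂ} {p : ℂ → ℂ}
    {Φ : ℝ × ℝ × ℝ → ℂ → ℂ} (hΦ : ContDiff ℝ 4 (Function.uncurry Φ)) {s : ℝ → ℂ} {l μ : ℂ}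
    (hp : DifferentiableAt ℂ p l)
    (hLax : ∀ ν x, evolutionOp a b (fun y => Φ y ν) x = p ν * Φ x ν)
    (hdbar : ∀ x, dbar (Φ x) l = s x.2.2 * Φ x μ)
    (hnz : ∀ t, ∃ x : ℝ × ℝ × ℝ, x.2.2 = t ∧ Φ x μ ≠ 0) (t : ℝ) :
    s t = exp ((p μ - p l) * t) * s 0 := by
  refine eq_exp_smul_of_hasDerivAt_smul (fun τ => ?_) t
  obtain ⟨x, rfl, hx⟩ := hnz τ
  exact hasDerivAt_scattering_data hΦ hp (fun ν => hLax ν x) hdbar hx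

end ScatteringData

/-- Linear evolution of the continuous scattering data:
`s(λ,x₃) = e^{(λ̄³−λ³)x₃} s(λ,0)`. -/
theorem continuous_scattering_data_evolves_linearly
    (u w : ℝ × ℝ × ℝ → ℝ) (hu : ContDiff ℝ (⊤ : ℕ∞) u) (hw : ContDiff ℝ (⊤ : ℕ∞) w)
    (huw : ∀ x, p1 w x = p2 u x)
    (Φ : ℝ × ℝ × ℝ → ℂ → ℂ)
    (hΦ : ContDiff ℝ (⊤ : ℕ∞) (fun q : (ℝ × ℝ × ℝ) × ℂ => Φ q.1 q.2))
    (s : ℂ → ℝ → ℂ)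
    (hs : ∀ lam : ℂ, Differentiable ℝ (s lam))
    (hLax : ∀ lam : ℂ, ∀ x : ℝ × ℝ × ℝ, Mop u w lam (fun y => Φ y lam) x = 0)
    (hdbar : ∀ x : ℝ × ℝ × ℝ, ∀ lam : ℂ,
      dbar (fun μ => Φ x μ) lam = s lam x.2.2 * Φ x ((starRingEnd ℂ) lam))
    (hnz : ∀ lam : ℂ, ∀ t : ℝ,
      ∃ x : ℝ × ℝ × ℝ, x.2.2 = t ∧ Φ x ((starRingEnd ℂ) lam) ≠ 0) :
    ∀ lam : ℂ, ∀ t : ℝ,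
      s lam t = Complex.exp ((((starRingEnd ℂ) lam) ^ 3 - lam ^ 3) * t) * s lam 0 := by
  intro lam t
  exact continuous_scattering_data_evolves_linearly_general (p := (· ^ 3))
    (contDiff_infty.1 hΦ 4) (by fun_prop) (fun ν x => Mop_eq_zero_iff.1 (hLax ν x))
    (fun x => hdbar x lam) (hnz lam) t
end
end

section
/- Let κ₁ ≠ κ₂ be real numbers. Suppose Φ(·,κ₁), Φ(·,κ₂) : ℝ³ → ℂ are smooth with 𝓜_{κ₁}Φ(·,κ₁) = 0 and 𝓜_{κ₂}Φ(·,κ₂) = 0 on ℝ³, and D : ℝ → ℂ is differentiable with −κ₁Φ(x,κ₁) = D(x₃)·Φ(x,κ₂) for all x ∈ ℝ³. If for every t ∈ ℝ there exists x ∈ ℝ³ with x₃ = t and Φ(x,κ₂) ≠ 0, then the discrete scattering data evolves linearly: D(x₃) = e^{(κ₂³−κ₁³)x₃}·D(0) for all x₃ ∈ ℝ. -/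
open Complex MeasureTheory

noncomputable section

/-!
Multiplication by a function `D` of `x₃` alone commutes with every term of `𝓜_λ` except `-∂_{x₃}`,
so `𝓜_λ (D Φ) = D 𝓜_λ Φ - D' Φ`. Applying `𝓜_{κ₁}` to `-κ₁ Φ₁ = D Φ₂` and using
`𝓜_{κ₁} = 𝓜_{κ₂} + (κ₂³ - κ₁³)` gives `D' Φ₂ = (κ₂³ - κ₁³) D Φ₂`. Choosing a point of each slice
`x₃ = t` at which `Φ₂ ≠ 0` turns this into a linear ordinary differential equation for `D`.
-/

lemma p1_comp_snd_mul {𝕜 : Type*} [NormedDivisionRing 𝕜] [NormedAlgebra ℝ 𝕜]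
    (c : ℝ × ℝ → 𝕜) (f : ℝ × ℝ × ℝ → 𝕜) :
    p1 (fun x => c x.2 * f x) = fun x => c x.2 * p1 f x :=
  funext fun x => deriv_const_mul_field (c x.2)

lemma p3_mul {𝔸 : Type*} [NormedRing 𝔸] [NormedAlgebra ℝ 𝔸] {f g : ℝ × ℝ × ℝ → 𝔸}
    {x : ℝ × ℝ × ℝ} (hf : DifferentiableAt ℝ f x) (hg : DifferentiableAt ℝ g x) :
    p3 (fun y => f y * g y) x = p3 f x * g x + f x * p3 g x := by
  have hline : DifferentiableAt ℝ (fun t : ℝ => (x.1, x.2.1, t)) x.2.2 := by fun_prop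
  exact deriv_fun_mul (hf.comp x.2.2 hline) (hg.comp x.2.2 hline)

lemma Mop_const_mul (u w : ℝ × ℝ × ℝ → ℝ) (lam a : ℂ) (Φ : ℝ × ℝ × ℝ → ℂ) (x : ℝ × ℝ × ℝ) :
    Mop u w lam (fun y => a * Φ y) x = a * Mop u w lam Φ x := by
  have hp1 := p1_comp_snd_mul fun _ => a
  have hp3 : p3 (fun y => a * Φ y) x = a * p3 Φ x := deriv_const_mul_field a
  simp only [Mop, hp1, hp3]
  ring

lemma Mop_comp_third_mul (u w : ℝ × ℝ × ℝ → ℝ) (lam : ℂ) {D : ℝ → ℂ} {Φ : ℝ × ℝ × ℝ → ℂ}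
    {x : ℝ × ℝ × ℝ} (hD : DifferentiableAt ℝ D x.2.2) (hΦ : DifferentiableAt ℝ Φ x) :
    Mop u w lam (fun y => D y.2.2 * Φ y) x =
      D x.2.2 * Mop u w lam Φ x - deriv D x.2.2 * Φ x := by
  have hp1 := p1_comp_snd_mul fun y => D y.2
  have hD₃ : DifferentiableAt ℝ (fun y : ℝ × ℝ × ℝ => D y.2.2) x :=
    hD.comp x (by fun_prop : DifferentiableAt ℝ (fun y : ℝ × ℝ × ℝ => y.2.2) x)
  have hp3 : p3 (fun y => D y.2.2 * Φ y) x = deriv D x.2.2 * Φ x + D x.2.2 * p3 Φ x :=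
    p3_mul hD₃ hΦ
  simp only [Mop, hp1, hp3]
  ring

lemma Mop_eq_Mop_add (u w : ℝ × ℝ × ℝ → ℝ) (lam μ : ℂ) (Φ : ℝ × ℝ × ℝ → ℂ)
    (x : ℝ × ℝ × ℝ) : Mop u w lam Φ x = Mop u w μ Φ x + (μ ^ 3 - lam ^ 3) * Φ x := by
  simp only [Mop]
  ring

lemma eq_exp_smul_of_deriv_eq_smul {E : Type*} [NormedAddCommGroup E] [NormedSpace ℂ E]
    {f : ℝ → E} {c : ℂ} (hf : Differentiable ℝ f) (hode : ∀ t, deriv f t = c • f t) (t : ℝ) :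
    f t = exp (c * t) • f 0 := by
  have hexp (s : ℝ) : HasDerivAt (fun r : ℝ => exp (-(c * r))) (exp (-(c * s)) * -c) s := by
    simpa using ((ofRealCLM.hasDerivAt (x := s)).const_mul c).neg.cexp
  have hderiv (s : ℝ) : HasDerivAt (fun r : ℝ => exp (-(c * r)) • f r) 0 s := by
    refine ((hexp s).smul (hf s).hasDerivAt).congr_deriv ?_
    rw [hode, smul_smul, ← add_smul, ← mul_add, add_neg_cancel, mul_zero, zero_smul]
  have hconst : exp (-(c * t)) • f t = f 0 := by
    simpa using is_const_of_deriv_eq_zero (fun s => (hderiv s).differentiableAt)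
      (fun s => (hderiv s).deriv) t 0
  rw [← hconst, smul_smul, ← exp_add, add_neg_cancel, exp_zero, one_smul]

theorem discrete_scattering_data_evolves_linearly_general
    (u w : ℝ × ℝ × ℝ → ℝ) (κ₁ κ₂ a : ℂ) {Φ₁ Φ₂ : ℝ × ℝ × ℝ → ℂ}
    (hΦ₂ : ContDiff ℝ 3 Φ₂)
    (hLax₁ : ∀ x, Mop u w κ₁ Φ₁ x = 0) (hLax₂ : ∀ x, Mop u w κ₂ Φ₂ x = 0)
    {D : ℝ → ℂ} (hD : Differentiable ℝ D)
    (hsym : ∀ x, a * Φ₁ x = D x.2.2 * Φ₂ x)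
    (hnz : ∀ t : ℝ, ∃ x : ℝ × ℝ × ℝ, x.2.2 = t ∧ Φ₂ x ≠ 0) (t : ℝ) :
    D t = exp ((κ₂ ^ 3 - κ₁ ^ 3) * t) * D 0 := by
  refine eq_exp_smul_of_deriv_eq_smul hD (fun s => ?_) t
  obtain ⟨x, rfl, hx⟩ := hnz s
  refine mul_right_cancel₀ hx (sub_eq_zero.mp ?_).symm
  calc (κ₂ ^ 3 - κ₁ ^ 3) * D x.2.2 * Φ₂ x - deriv D x.2.2 * Φ₂ x
      = D x.2.2 * Mop u w κ₁ Φ₂ x - deriv D x.2.2 * Φ₂ x := by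
        rw [Mop_eq_Mop_add u w κ₁ κ₂, hLax₂]
        ring
    _ = Mop u w κ₁ (fun y => D y.2.2 * Φ₂ y) x :=
        (Mop_comp_third_mul u w κ₁ (hD _) (hΦ₂.differentiable (by norm_num) x)).symm
    _ = Mop u w κ₁ (fun y => a * Φ₁ y) x := by rw [funext hsym]
    _ = 0 := by rw [Mop_const_mul, hLax₁, mul_zero]

/-- Linear evolution of the discrete scattering data:
`D(x₃) = e^{(κ₂³−κ₁³)x₃} D(0)`. -/
theorem discrete_scattering_data_evolves_linearly
    (u w : ℝ × ℝ × ℝ → ℝ) (hu : ContDiff ℝ (⊤ : ℕ∞) u) (hw : ContDiff ℝ (⊤ : ℕ∞) w)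
    (huw : ∀ x, p1 w x = p2 u x)
    (κ₁ κ₂ : ℝ) (hκ : κ₁ ≠ κ₂)
    (Φ₁ Φ₂ : ℝ × ℝ × ℝ → ℂ)
    (hΦ₁ : ContDiff ℝ (⊤ : ℕ∞) Φ₁) (hΦ₂ : ContDiff ℝ (⊤ : ℕ∞) Φ₂)
    (hLax₁ : ∀ x : ℝ × ℝ × ℝ, Mop u w (κ₁ : ℂ) Φ₁ x = 0)
    (hLax₂ : ∀ x : ℝ × ℝ × ℝ, Mop u w (κ₂ : ℂ) Φ₂ x = 0)
    (D : ℝ → ℂ) (hD : Differentiable ℝ D)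
    (hsym : ∀ x : ℝ × ℝ × ℝ, -(κ₁ : ℂ) * Φ₁ x = D x.2.2 * Φ₂ x)
    (hnz : ∀ t : ℝ, ∃ x : ℝ × ℝ × ℝ, x.2.2 = t ∧ Φ₂ x ≠ 0) :
    ∀ t : ℝ, D t = Complex.exp (((κ₂ : ℂ) ^ 3 - (κ₁ : ℂ) ^ 3) * t) * D 0 :=
  discrete_scattering_data_evolves_linearly_general u w κ₁ κ₂ (-κ₁) (contDiff_infty.mp hΦ₂ 3)
    hLax₁ hLax₂ hD hsym hnz
end
end

section
/- For every λ ∈ ℂ∖{0} and every x ∈ ℝ³ one has (−∂_{x₂} + ∂²_{x₁} + 2λ∂_{x₁} + u_s(x))χ(x,λ) = 0, and consequently the Sato eigenfunction φ(x,λ) = e^{λx₁+λ²x₂}χ(x,λ) satisfies (−∂_{x₂} + ∂²_{x₁} + u_s(x))φ(x,λ) = 0 (all derivatives in x₁, x₂ with x₃ held fixed). -/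
open Complex

noncomputable section

/-- `θⱼ(x) = κⱼx₁ + κⱼ²x₂ + κⱼ³x₃`. -/
def theta (κ : ℝ) (x : ℝ × ℝ × ℝ) : ℝ :=
  κ * x.1 + κ ^ 2 * x.2.1 + κ ^ 3 * x.2.2

/-- `τ(x) = e^{θ₁(x)} + a e^{θ₂(x)}`. -/
def tau (κ₁ κ₂ a : ℝ) (x : ℝ × ℝ × ℝ) : ℝ :=
  Real.exp (theta κ₁ x) + a * Real.exp (theta κ₂ x)

/-- The `Gr(1,2)_{>0}` KP line soliton `u_s = 2∂²_{x₁} ln τ`. -/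
def us (κ₁ κ₂ a : ℝ) (x : ℝ × ℝ × ℝ) : ℝ :=
  2 * p1 (p1 (fun y => Real.log (tau κ₁ κ₂ a y))) x

/-- The Sato normalized eigenfunction. -/
def chi (κ₁ κ₂ a : ℝ) (x : ℝ × ℝ × ℝ) (lam : ℂ) : ℂ :=
  ((1 - (κ₁ : ℂ) / lam) * Real.exp (theta κ₁ x)
    + (1 - (κ₂ : ℂ) / lam) * (a : ℂ) * Real.exp (theta κ₂ x)) / (tau κ₁ κ₂ a x : ℂ)

/-- The Sato eigenfunction `φ(x,λ) = e^{λx₁+λ²x₂} χ(x,λ)`. -/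
def satoPhi (κ₁ κ₂ a : ℝ) (x : ℝ × ℝ × ℝ) (lam : ℂ) : ℂ :=
  Complex.exp (lam * x.1 + lam ^ 2 * x.2.1) * chi κ₁ κ₂ a x lam

/-!
The logarithm `w = ln τ` of a solution of the heat equation `∂₂τ = ∂₁²τ` satisfies
`∂₂w = ∂₁²w + (∂₁w)²` (Cole–Hopf), so `v = ∂₁w` satisfies the Burgers equation
`∂₂v = ∂₁²v + 2v∂₁v`. The soliton `τ` solves the heat equation, `u_s = 2∂₁v`, and the normalized
eigenfunction is `χ = 1 - v/λ`; for it the first Lax equation is exactly `λ⁻¹` times the Burgers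
equation. Multiplication by `e^{λx₁+λ²x₂}` turns `∂₁` into `∂₁ + λ` and `∂₂` into `∂₂ + λ²`, which
gives the second Lax equation.
-/

open scoped Topology

section PartialDerivatives

variable {E : Type*} [NormedAddCommGroup E] [NormedSpace ℝ E]
  {f g : ℝ × ℝ × ℝ → E} {x : ℝ × ℝ × ℝ}

lemma hasDerivAt_fst_fderiv (hf : DifferentiableAt ℝ f x) :
    HasDerivAt (fun t => f (t, x.2.1, x.2.2)) (fderiv ℝ f x (1, 0, 0)) x.1 :=
  hf.hasFDerivAt.comp_hasDerivAt x.1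
    ((hasDerivAt_id x.1).prodMk (hasDerivAt_const x.1 (x.2.1, x.2.2)))

lemma hasDerivAt_snd_fderiv (hf : DifferentiableAt ℝ f x) :
    HasDerivAt (fun t => f (x.1, t, x.2.2)) (fderiv ℝ f x (0, 1, 0)) x.2.1 :=
  hf.hasFDerivAt.comp_hasDerivAt x.2.1
    ((hasDerivAt_const x.2.1 x.1).prodMk
      ((hasDerivAt_id x.2.1).prodMk (hasDerivAt_const x.2.1 x.2.2)))

lemma p1_eq_fderiv (hf : DifferentiableAt ℝ f x) : p1 f x = fderiv ℝ f x (1, 0, 0) :=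
  (hasDerivAt_fst_fderiv hf).deriv

lemma p2_eq_fderiv (hf : DifferentiableAt ℝ f x) : p2 f x = fderiv ℝ f x (0, 1, 0) :=
  (hasDerivAt_snd_fderiv hf).deriv

lemma hasDerivAt_p1 (hf : DifferentiableAt ℝ f x) :
    HasDerivAt (fun t => f (t, x.2.1, x.2.2)) (p1 f x) x.1 :=
  (hasDerivAt_fst_fderiv hf).differentiableAt.hasDerivAt

lemma hasDerivAt_p2 (hf : DifferentiableAt ℝ f x) :
    HasDerivAt (fun t => f (x.1, t, x.2.2)) (p2 f x) x.2.1 :=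
  (hasDerivAt_snd_fderiv hf).differentiableAt.hasDerivAt

lemma p1_congr (h : f =ᶠ[𝓝 x] g) : p1 f x = p1 g x := by
  have hcont : ContinuousAt (fun t : ℝ => (t, x.2.1, x.2.2)) x.1 := by fun_prop
  exact Filter.EventuallyEq.deriv_eq (hcont.eventually h)

lemma p1_eventuallyEq_fderiv (hf : ContDiffAt ℝ 1 f x) :
    p1 f =ᶠ[𝓝 x] fun y => fderiv ℝ f y (1, 0, 0) := by
  filter_upwards [hf.eventually (by simp)] with y hy
  exact p1_eq_fderiv (hy.differentiableAt one_ne_zero)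

lemma p2_eventuallyEq_fderiv (hf : ContDiffAt ℝ 1 f x) :
    p2 f =ᶠ[𝓝 x] fun y => fderiv ℝ f y (0, 1, 0) := by
  filter_upwards [hf.eventually (by simp)] with y hy
  exact p2_eq_fderiv (hy.differentiableAt one_ne_zero)

lemma contDiffAt_p1 {m n : WithTop ℕ∞} (hf : ContDiffAt ℝ n f x) (hmn : m + 1 ≤ n) :
    ContDiffAt ℝ m (p1 f) x :=
  ((hf.fderiv_right hmn).clm_apply contDiffAt_const).congr_of_eventuallyEq
    (p1_eventuallyEq_fderiv (hf.of_le (le_add_self.trans hmn)))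

lemma differentiableAt_p1 (hf : ContDiffAt ℝ 2 f x) : DifferentiableAt ℝ (p1 f) x :=
  (contDiffAt_p1 hf one_add_one_eq_two.le).differentiableAt one_ne_zero

lemma p2_p1_comm (hf : ContDiffAt ℝ 2 f x) : p2 (p1 f) x = p1 (p2 f) x := by
  have hf₁ : ContDiffAt ℝ 1 f x := hf.of_le one_le_two
  have hdf : DifferentiableAt ℝ (fderiv ℝ f) x :=
    (hf.fderiv_right (m := 1) one_add_one_eq_two.le).differentiableAt one_ne_zero
  have hsymm : IsSymmSndFDerivAt ℝ f x := hf.isSymmSndFDerivAt (by simp)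
  calc p2 (p1 f) x = fderiv ℝ (p1 f) x (0, 1, 0) := p2_eq_fderiv (differentiableAt_p1 hf)
    _ = fderiv ℝ (fderiv ℝ f) x (0, 1, 0) (1, 0, 0) := by
      rw [(p1_eventuallyEq_fderiv hf₁).fderiv_eq,
        fderiv_clm_apply hdf (differentiableAt_const _)]
      simp
    _ = fderiv ℝ (fderiv ℝ f) x (1, 0, 0) (0, 1, 0) := hsymm _ _
    _ = p1 (fun y => fderiv ℝ f y (0, 1, 0)) x := by
      rw [p1_eq_fderiv (hdf.clm_apply (differentiableAt_const _)),
        fderiv_clm_apply hdf (differentiableAt_const _)]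
      simp
    _ = p1 (p2 f) x := (p1_congr (p2_eventuallyEq_fderiv hf₁)).symm

end PartialDerivatives

section ColeHopf

variable {τ w : ℝ × ℝ × ℝ → ℝ} {x : ℝ × ℝ × ℝ}

lemma p1_log (hτ : DifferentiableAt ℝ τ x) (hx : τ x ≠ 0) :
    p1 (fun y => Real.log (τ y)) x = p1 τ x / τ x :=
  ((hasDerivAt_p1 hτ).log hx).deriv

lemma p2_log (hτ : DifferentiableAt ℝ τ x) (hx : τ x ≠ 0) :
    p2 (fun y => Real.log (τ y)) x = p2 τ x / τ x :=
  ((hasDerivAt_p2 hτ).log hx).deriv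

lemma p1_p1_log (hτ : ContDiffAt ℝ 2 τ x) (hx : τ x ≠ 0) :
    p1 (p1 fun y => Real.log (τ y)) x = p1 (p1 τ) x / τ x - (p1 τ x / τ x) ^ 2 := by
  have hlog : p1 (fun y => Real.log (τ y)) =ᶠ[𝓝 x] fun y => p1 τ y / τ y := by
    filter_upwards [hτ.eventually (by simp), hτ.continuousAt.eventually_ne hx] with y hy hy₀
    exact p1_log (hy.differentiableAt two_ne_zero) hy₀
  have hquot : p1 (fun y => p1 τ y / τ y) x =
      (p1 (p1 τ) x * τ x - p1 τ x * p1 τ x) / τ x ^ 2 :=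
    ((hasDerivAt_p1 (differentiableAt_p1 hτ)).div
      (hasDerivAt_p1 (hτ.differentiableAt two_ne_zero)) hx).deriv
  rw [p1_congr hlog, hquot]
  field_simp

lemma potential_burgers_log_of_heat (hτ : ContDiffAt ℝ 2 τ x) (hx : τ x ≠ 0)
    (hheat : p2 τ x = p1 (p1 τ) x) :
    p2 (fun y => Real.log (τ y)) x =
      p1 (p1 fun y => Real.log (τ y)) x + p1 (fun y => Real.log (τ y)) x ^ 2 := by
  have hd : DifferentiableAt ℝ τ x := hτ.differentiableAt two_ne_zero
  rw [p1_p1_log hτ hx, p1_log hd hx, p2_log hd hx, hheat]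
  ring

lemma burgers_p1_of_potential_burgers (hw : ContDiffAt ℝ 3 w x)
    (hpot : p2 w =ᶠ[𝓝 x] fun y => p1 (p1 w) y + p1 w y ^ 2) :
    p2 (p1 w) x = p1 (p1 (p1 w)) x + 2 * p1 w x * p1 (p1 w) x := by
  have hv : ContDiffAt ℝ 2 (p1 w) x := contDiffAt_p1 hw two_add_one_eq_three.le
  have hrhs : p1 (fun y => p1 (p1 w) y + p1 w y ^ 2) x =
      p1 (p1 (p1 w)) x + 2 * p1 w x * p1 (p1 w) x :=
    (((hasDerivAt_p1 (differentiableAt_p1 hv)).add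
      ((hasDerivAt_p1 (hv.differentiableAt two_ne_zero)).pow 2)).congr_deriv
        (by simp)).deriv
  rw [p2_p1_comm (hw.of_le (by norm_num)), p1_congr hpot, hrhs]

theorem burgers_p1_log_of_heat (hτ : ContDiffAt ℝ 3 τ x) (hx : τ x ≠ 0)
    (hheat : p2 τ =ᶠ[𝓝 x] p1 (p1 τ)) :
    p2 (p1 fun y => Real.log (τ y)) x =
      p1 (p1 (p1 fun y => Real.log (τ y))) x +
        2 * p1 (fun y => Real.log (τ y)) x * p1 (p1 fun y => Real.log (τ y)) x := by
  refine burgers_p1_of_potential_burgers (hτ.log hx) ?_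
  filter_upwards [hτ.eventually (by simp), hτ.continuousAt.eventually_ne hx, hheat]
    with y hy hy₀ hheat_y
  exact potential_burgers_log_of_heat (hy.of_le (by norm_num)) hy₀ hheat_y

end ColeHopf

section Dressing

variable {v : ℝ × ℝ × ℝ → ℝ} {x : ℝ × ℝ × ℝ} {lam : ℂ}

/-- The symbol `1 - v λ⁻¹` of the dressing operator `1 - v ∂₁⁻¹` of the KP hierarchy; for
`v = ∂₁ ln τ` with `τ` the Gr(1,2) tau function it is the Sato normalized eigenfunction. -/
def dressingSymbol (v : ℝ × ℝ × ℝ → ℝ) (lam : ℂ) (x : ℝ × ℝ × ℝ) : ℂ :=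
  1 - (v x : ℂ) / lam

lemma contDiffAt_dressingSymbol {n : WithTop ℕ∞} (hv : ContDiffAt ℝ n v x) :
    ContDiffAt ℝ n (dressingSymbol v lam) x :=
  contDiffAt_const.sub ((ofRealCLM.contDiff.contDiffAt.comp x hv).div_const lam)

lemma p1_dressingSymbol (hv : DifferentiableAt ℝ v x) :
    p1 (dressingSymbol v lam) x = -(((p1 v x : ℝ) : ℂ) / lam) :=
  (((hasDerivAt_p1 hv).ofReal_comp.div_const lam).const_sub 1).deriv

lemma p2_dressingSymbol (hv : DifferentiableAt ℝ v x) :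
    p2 (dressingSymbol v lam) x = -(((p2 v x : ℝ) : ℂ) / lam) :=
  (((hasDerivAt_p2 hv).ofReal_comp.div_const lam).const_sub 1).deriv

lemma p1_p1_dressingSymbol (hv : ContDiffAt ℝ 2 v x) :
    p1 (p1 (dressingSymbol v lam)) x = -(((p1 (p1 v) x : ℝ) : ℂ) / lam) := by
  have hp1 : p1 (dressingSymbol v lam) =ᶠ[𝓝 x] fun y => -(((p1 v y : ℝ) : ℂ) / lam) := by
    filter_upwards [hv.eventually (by simp)] with y hy
    exact p1_dressingSymbol (hy.differentiableAt two_ne_zero)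
  rw [p1_congr hp1]
  exact ((hasDerivAt_p1 (differentiableAt_p1 hv)).ofReal_comp.div_const lam).neg.deriv

lemma lax_dressingSymbol_of_burgers (hv : ContDiffAt ℝ 2 v x) (hlam : lam ≠ 0)
    (hburgers : p2 v x = p1 (p1 v) x + 2 * v x * p1 v x) :
    - p2 (dressingSymbol v lam) x + p1 (p1 (dressingSymbol v lam)) x
      + 2 * lam * p1 (dressingSymbol v lam) x
      + ((2 * p1 v x : ℝ) : ℂ) * dressingSymbol v lam x = 0 := by
  have hd : DifferentiableAt ℝ v x := hv.differentiableAt two_ne_zero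
  rw [p1_p1_dressingSymbol hv, p1_dressingSymbol hd, p2_dressingSymbol hd, hburgers,
    dressingSymbol]
  push_cast
  field_simp
  ring

end Dressing

section PlaneWave

variable {f : ℝ × ℝ × ℝ → ℂ} {x : ℝ × ℝ × ℝ} {lam : ℂ}

/-- The vacuum eigenfunction `e^{λx₁+λ²x₂}` of `-∂₂ + ∂₁²`, by which a normalized eigenfunction is
multiplied. It has no factor `e^{λ³x₃}`, as only `x₁` and `x₂` enter the Lax equation. -/
def planeWave (lam : ℂ) (x : ℝ × ℝ × ℝ) : ℂ :=
  Complex.exp (lam * x.1 + lam ^ 2 * x.2.1)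

lemma p1_planeWave_mul (hf : DifferentiableAt ℝ f x) :
    p1 (fun y => planeWave lam y * f y) x = planeWave lam x * (p1 f x + lam * f x) := by
  have hphase : HasDerivAt (fun t : ℝ => lam * t + lam ^ 2 * x.2.1) lam x.1 := by
    simpa using ((hasDerivAt_id x.1).ofReal_comp.const_mul lam).add_const (lam ^ 2 * (x.2.1 : ℂ))
  have hmul : p1 (fun y => planeWave lam y * f y) x =
      planeWave lam x * lam * f x + planeWave lam x * p1 f x :=
    (hphase.cexp.mul (hasDerivAt_p1 hf)).deriv
  rw [hmul]
  ring

lemma p2_planeWave_mul (hf : DifferentiableAt ℝ f x) :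
    p2 (fun y => planeWave lam y * f y) x = planeWave lam x * (p2 f x + lam ^ 2 * f x) := by
  have hphase : HasDerivAt (fun t : ℝ => lam * x.1 + lam ^ 2 * t) (lam ^ 2) x.2.1 := by
    simpa using ((hasDerivAt_id x.2.1).ofReal_comp.const_mul (lam ^ 2)).const_add (lam * (x.1 : ℂ))
  have hmul : p2 (fun y => planeWave lam y * f y) x =
      planeWave lam x * lam ^ 2 * f x + planeWave lam x * p2 f x :=
    (hphase.cexp.mul (hasDerivAt_p2 hf)).deriv
  rw [hmul]
  ring

lemma p1_p1_planeWave_mul (hf : ContDiffAt ℝ 2 f x) :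
    p1 (p1 fun y => planeWave lam y * f y) x =
      planeWave lam x * (p1 (p1 f) x + 2 * lam * p1 f x + lam ^ 2 * f x) := by
  have hp1 : p1 (fun y => planeWave lam y * f y) =ᶠ[𝓝 x]
      fun y => planeWave lam y * (p1 f y + lam * f y) := by
    filter_upwards [hf.eventually (by simp)] with y hy
    exact p1_planeWave_mul (hy.differentiableAt two_ne_zero)
  have hd : DifferentiableAt ℝ f x := hf.differentiableAt two_ne_zero
  have hd₁ : DifferentiableAt ℝ (p1 f) x := differentiableAt_p1 hf
  have hsum : p1 (fun y => p1 f y + lam * f y) x = p1 (p1 f) x + lam * p1 f x :=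
    ((hasDerivAt_p1 hd₁).add ((hasDerivAt_p1 hd).const_mul lam)).deriv
  have hdsum : DifferentiableAt ℝ (fun y => p1 f y + lam * f y) x := hd₁.add (hd.const_mul lam)
  rw [p1_congr hp1, p1_planeWave_mul hdsum, hsum]
  ring

lemma lax_planeWave_mul (hf : ContDiffAt ℝ 2 f x) (u : ℂ) :
    - p2 (fun y => planeWave lam y * f y) x + p1 (p1 fun y => planeWave lam y * f y) x
        + u * (planeWave lam x * f x) =
      planeWave lam x * (- p2 f x + p1 (p1 f) x + 2 * lam * p1 f x + u * f x) := by
  rw [p1_p1_planeWave_mul hf, p2_planeWave_mul (hf.differentiableAt two_ne_zero)]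
  ring

end PlaneWave

section LineSoliton

lemma contDiff_tau (κ₁ κ₂ a : ℝ) {n : WithTop ℕ∞} : ContDiff ℝ n (tau κ₁ κ₂ a) := by
  unfold tau theta
  fun_prop

lemma differentiable_exp_theta (κ : ℝ) : Differentiable ℝ fun x => Real.exp (theta κ x) := by
  unfold theta
  fun_prop

lemma tau_pos (κ₁ κ₂ : ℝ) {a : ℝ} (ha : 0 < a) (x : ℝ × ℝ × ℝ) : 0 < tau κ₁ κ₂ a x := by
  unfold tau
  positivity

lemma p1_exp_theta (κ : ℝ) (x : ℝ × ℝ × ℝ) :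
    p1 (fun y => Real.exp (theta κ y)) x = κ * Real.exp (theta κ x) := by
  have hphase : HasDerivAt (fun t => theta κ (t, x.2.1, x.2.2)) κ x.1 := by
    simpa [theta] using
      (((hasDerivAt_id x.1).const_mul κ).add_const (κ ^ 2 * x.2.1)).add_const (κ ^ 3 * x.2.2)
  exact hphase.exp.deriv.trans (mul_comm _ _)

lemma p2_exp_theta (κ : ℝ) (x : ℝ × ℝ × ℝ) :
    p2 (fun y => Real.exp (theta κ y)) x = κ ^ 2 * Real.exp (theta κ x) := by
  have hphase : HasDerivAt (fun t => theta κ (x.1, t, x.2.2)) (κ ^ 2) x.2.1 := by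
    simpa [theta] using
      (((hasDerivAt_id x.2.1).const_mul (κ ^ 2)).const_add (κ * x.1)).add_const (κ ^ 3 * x.2.2)
  exact hphase.exp.deriv.trans (mul_comm _ _)

lemma p1_exp_theta_add (κ₁ κ₂ b c : ℝ) (x : ℝ × ℝ × ℝ) :
    p1 (fun y => b * Real.exp (theta κ₁ y) + c * Real.exp (theta κ₂ y)) x =
      b * κ₁ * Real.exp (theta κ₁ x) + c * κ₂ * Real.exp (theta κ₂ x) := by
  rw [mul_assoc, mul_assoc, ← p1_exp_theta, ← p1_exp_theta]
  exact (((hasDerivAt_p1 (differentiable_exp_theta κ₁ x)).const_mul b).add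
    ((hasDerivAt_p1 (differentiable_exp_theta κ₂ x)).const_mul c)).deriv

lemma p2_exp_theta_add (κ₁ κ₂ b c : ℝ) (x : ℝ × ℝ × ℝ) :
    p2 (fun y => b * Real.exp (theta κ₁ y) + c * Real.exp (theta κ₂ y)) x =
      b * κ₁ ^ 2 * Real.exp (theta κ₁ x) + c * κ₂ ^ 2 * Real.exp (theta κ₂ x) := by
  rw [mul_assoc, mul_assoc, ← p2_exp_theta, ← p2_exp_theta]
  exact (((hasDerivAt_p2 (differentiable_exp_theta κ₁ x)).const_mul b).add
    ((hasDerivAt_p2 (differentiable_exp_theta κ₂ x)).const_mul c)).deriv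

lemma p1_tau (κ₁ κ₂ a : ℝ) : p1 (tau κ₁ κ₂ a) = fun x =>
    κ₁ * Real.exp (theta κ₁ x) + a * κ₂ * Real.exp (theta κ₂ x) := by
  funext x
  unfold tau
  simpa only [one_mul] using p1_exp_theta_add κ₁ κ₂ 1 a x

lemma heat_tau (κ₁ κ₂ a : ℝ) : p2 (tau κ₁ κ₂ a) = p1 (p1 (tau κ₁ κ₂ a)) := by
  funext x
  have hp2 : p2 (tau κ₁ κ₂ a) x =
      κ₁ ^ 2 * Real.exp (theta κ₁ x) + a * κ₂ ^ 2 * Real.exp (theta κ₂ x) := by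
    unfold tau
    simpa only [one_mul] using p2_exp_theta_add κ₁ κ₂ 1 a x
  rw [hp2, p1_tau, p1_exp_theta_add]
  ring

lemma chi_eq_dressingSymbol {κ₁ κ₂ a : ℝ} {x : ℝ × ℝ × ℝ} (hx : tau κ₁ κ₂ a x ≠ 0) (lam : ℂ) :
    chi κ₁ κ₂ a x lam = dressingSymbol (p1 fun y => Real.log (tau κ₁ κ₂ a y)) lam x := by
  have hxc : (tau κ₁ κ₂ a x : ℂ) ≠ 0 := ofReal_ne_zero.mpr hx
  have hτ : (tau κ₁ κ₂ a x : ℂ) = Real.exp (theta κ₁ x) + a * Real.exp (theta κ₂ x) := by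
    simp only [tau, ofReal_add, ofReal_mul]
  rw [dressingSymbol, p1_log ((contDiff_tau κ₁ κ₂ a).differentiable one_ne_zero x) hx, p1_tau, chi,
    ofReal_div, div_right_comm, one_sub_div hxc, hτ]
  push_cast
  ring

end LineSoliton

/-- Where `τ < 0`, `Real.log τ` is `ln |τ|`, which has the same derivatives as any branch of
`ln τ`. -/
theorem sato_eigenfunction_satisfies_Lax_general {τ : ℝ × ℝ × ℝ → ℝ} {x : ℝ × ℝ × ℝ} {lam : ℂ}
    (hτ : ContDiffAt ℝ 3 τ x) (hx : τ x ≠ 0) (hheat : p2 τ =ᶠ[𝓝 x] p1 (p1 τ)) (hlam : lam ≠ 0) :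
    let v := p1 fun y => Real.log (τ y)
    let χ := dressingSymbol v lam
    (- p2 χ x + p1 (p1 χ) x + 2 * lam * p1 χ x + ((2 * p1 v x : ℝ) : ℂ) * χ x = 0)
      ∧ (- p2 (fun y => planeWave lam y * χ y) x + p1 (p1 fun y => planeWave lam y * χ y) x
        + ((2 * p1 v x : ℝ) : ℂ) * (planeWave lam x * χ x) = 0) := by
  intro v χ
  have hv : ContDiffAt ℝ 2 v x := contDiffAt_p1 (hτ.log hx) two_add_one_eq_three.le
  have hχ : - p2 χ x + p1 (p1 χ) x + 2 * lam * p1 χ x + ((2 * p1 v x : ℝ) : ℂ) * χ x = 0 :=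
    lax_dressingSymbol_of_burgers hv hlam (burgers_p1_log_of_heat hτ hx hheat)
  refine ⟨hχ, ?_⟩
  rw [lax_planeWave_mul (contDiffAt_dressingSymbol hv), hχ, mul_zero]

/-- The Sato normalized eigenfunction satisfies the Lax equation
`(−∂_{x₂} + ∂²_{x₁} + 2λ∂_{x₁} + u_s)χ = 0`, and the Sato eigenfunction satisfies
`(−∂_{x₂} + ∂²_{x₁} + u_s)φ = 0`. -/
theorem sato_eigenfunction_satisfies_Lax (κ₁ κ₂ a : ℝ) (hκ : κ₁ < κ₂) (ha : 0 < a) :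
    ∀ lam : ℂ, lam ≠ 0 → ∀ x : ℝ × ℝ × ℝ,
      (- p2 (fun y => chi κ₁ κ₂ a y lam) x
        + p1 (p1 (fun y => chi κ₁ κ₂ a y lam)) x
        + 2 * lam * p1 (fun y => chi κ₁ κ₂ a y lam) x
        + (us κ₁ κ₂ a x : ℂ) * chi κ₁ κ₂ a x lam = 0)
      ∧ (- p2 (fun y => satoPhi κ₁ κ₂ a y lam) x
        + p1 (p1 (fun y => satoPhi κ₁ κ₂ a y lam)) x
        + (us κ₁ κ₂ a x : ℂ) * satoPhi κ₁ κ₂ a x lam = 0) := by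
  intro lam hlam x
  simp only [satoPhi, chi_eq_dressingSymbol (tau_pos κ₁ κ₂ ha _).ne']
  exact sato_eigenfunction_satisfies_Lax_general (contDiff_tau κ₁ κ₂ a).contDiffAt
    (tau_pos κ₁ κ₂ ha x).ne' (.of_eq (heat_tau κ₁ κ₂ a)) hlam
end
end

section
/- There exists a constant C > 0 such that for every measurable s_c : ℂ → ℂ and every λ ∈ ℂ: ∬_ℂ |s_c(ζ)|·|ζ−λ|^{−1} dA(ζ) ≤ C·(‖S‖_{L²(ℝ²)} + ‖S‖_{L∞(ℝ²)}). Consequently, for every bounded measurable φ : ℂ → ℂ, every x ∈ ℝ³ and every λ ∈ ℂ, the Cauchy integral of the continuous scattering operator satisfies |∬_ℂ s_c(ζ)·e^{(ζ̄−ζ)x₁+(ζ̄²−ζ²)x₂+(ζ̄³−ζ³)x₃}·φ(ζ̄)·(ζ−λ)^{−1} dA(ζ)| ≤ C·‖φ‖_{L∞}·(‖S‖_{L²(ℝ²)} + ‖S‖_{L∞(ℝ²)}). -/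
open Complex MeasureTheory
open scoped ENNReal NNReal

noncomputable section

/-- The change of variables `ζ(ξ,η) = −iπξ + η/(2ξ)`. -/
def zeta (p : ℝ × ℝ) : ℂ :=
  -(Real.pi : ℂ) * p.1 * Complex.I + (p.2 : ℂ) / (2 * p.1)

/-- `S(ξ,η) = s_c(ζ(ξ,η))`. -/
def Sfun (sc : ℂ → ℂ) (p : ℝ × ℝ) : ℂ := sc (zeta p)

/-- The phase `(ζ̄−ζ)x₁+(ζ̄²−ζ²)x₂+(ζ̄³−ζ³)x₃`. -/
def phase (x : ℝ × ℝ × ℝ) (ζ : ℂ) : ℂ :=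
  ((starRingEnd ℂ) ζ - ζ) * x.1 + (((starRingEnd ℂ) ζ) ^ 2 - ζ ^ 2) * x.2.1
    + (((starRingEnd ℂ) ζ) ^ 3 - ζ ^ 3) * x.2.2

/-!
In the coordinates `(ξ, η)` Lebesgue measure becomes `2|Im ζ|/π² dA(ζ)`, so
`∬ |Im ζ| |s_c|² dA = (π²/2) ‖S‖²_{L²}`. With `r = |ζ - λ|` and `|s_c| ≤ t`, a weighted AM-GM
inequality gives
`|s_c| / r ≤ |Im ζ| |s_c|² / t + t / (r (1 + |Im ζ| r))`,
and the last kernel, unlike `1 / r`, is integrable over the plane, with integral at most `16 π²`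
whatever `λ`: it is dominated by products of the one-variable function `1 / (√|t| (1 + |t|))`, whose
integral is `2π`. Letting `t` decrease to `‖S‖_{L²} + ‖S‖_{L∞}` yields the constant
`π²/2 + 16 π² = 33π²/2`. The exponential has modulus one, so the second estimate follows from the
first.
-/

section ExtendedNonneg

lemma le_const_mul_of_forall_nnreal_lt {a b c : ℝ≥0∞} (hc₀ : c ≠ 0) (hc : c ≠ ⊤)
    (h : ∀ t : ℝ≥0, b < t → a ≤ c * t) : a ≤ c * b := by
  rw [mul_comm, ← ENNReal.div_le_iff_le_mul (.inl hc₀) (.inl hc)]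
  refine le_of_forall_gt_imp_ge_of_dense fun t ht => ?_
  induction t with
  | top => exact le_top
  | coe t => exact ENNReal.div_le_of_le_mul' (h t ht)

lemma enorm_div_le_enorm_div_enorm {𝕜 : Type*} [NormedDivisionRing 𝕜] (a b : 𝕜) :
    ‖a / b‖ₑ ≤ ‖a‖ₑ / ‖b‖ₑ := by
  rcases eq_or_ne b 0 with rfl | hb
  · simp
  · rw [div_eq_mul_inv, enorm_mul, enorm_inv hb, div_eq_mul_inv]

lemma lintegral_comp_mul_left {c : ℝ} (hc : c ≠ 0) (f : ℝ → ℝ≥0∞) :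
    ∫⁻ t, f (c * t) = ENNReal.ofReal |c⁻¹| * ∫⁻ t, f t := by
  rw [← (measurableEmbedding_mulLeft₀ hc).lintegral_map, Real.map_volume_mul_left hc,
    lintegral_smul_measure, smul_eq_mul]

end ExtendedNonneg

section Kernel

open Filter Topology

/-- The integrable function `1 / (√|t| (1 + |t|))` on the line. Products of its values at the real
and imaginary parts dominate the two-dimensional Cauchy kernel damped by the weight `|Im ζ|`. -/
def sqrtKernel (t : ℝ) : ℝ := (√|t| * (1 + |t|))⁻¹

lemma sqrtKernel_nonneg (t : ℝ) : 0 ≤ sqrtKernel t := by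
  unfold sqrtKernel; positivity

@[fun_prop]
lemma measurable_sqrtKernel : Measurable sqrtKernel := by
  unfold sqrtKernel; fun_prop

lemma hasDerivAt_two_mul_arctan_sqrt {t : ℝ} (ht : 0 < t) :
    HasDerivAt (fun s => 2 * Real.arctan √s) (√t * (1 + t))⁻¹ t := by
  refine ((Real.hasDerivAt_sqrt ht.ne').arctan.const_mul 2).congr_deriv ?_
  rw [Real.sq_sqrt ht.le]
  field_simp

lemma integral_sqrtKernel : ∫ t, sqrtKernel t = 2 * Real.pi := by
  have tendsto_pi : Tendsto (fun s => 2 * Real.arctan √s) atTop (𝓝 (2 * (Real.pi / 2))) :=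
    ((tendsto_nhds_of_tendsto_nhdsWithin Real.tendsto_arctan_atTop).comp
      Real.tendsto_sqrt_atTop).const_mul 2
  have half_line : ∫ t in Set.Ioi (0 : ℝ), (√t * (1 + t))⁻¹ = Real.pi := by
    rw [integral_Ioi_of_hasDerivAt_of_nonneg (by fun_prop)
      (fun t ht => hasDerivAt_two_mul_arctan_sqrt ht)
      (fun t (ht : 0 < t) => by positivity) tendsto_pi]
    simp [mul_div_cancel₀]
  rw [← half_line, ← integral_comp_abs]
  rfl

lemma lintegral_sqrtKernel :
    ∫⁻ t, ENNReal.ofReal (sqrtKernel t) = ENNReal.ofReal (2 * Real.pi) := by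
  have integrable : Integrable sqrtKernel :=
    .of_integral_ne_zero (by rw [integral_sqrtKernel]; positivity)
  rw [← ofReal_integral_eq_lintegral_ofReal integrable (ae_of_all _ sqrtKernel_nonneg),
    integral_sqrtKernel]

lemma inv_mul_one_add_mul_le_sqrtKernel {x m r : ℝ} (hx : x ≠ 0) (hm : m ≠ 0)
    (hxr : |x| ≤ r) (hmr : |m| ≤ r) :
    (r * (1 + |m| * r))⁻¹ ≤ 2 * (sqrtKernel x * sqrtKernel m) := by
  have hr : 0 < r := (abs_pos.2 hx).trans_le hxr
  obtain ⟨X, hX, hXx⟩ : ∃ X, 0 < X ∧ X ^ 2 = |x| :=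
    ⟨√|x|, by positivity, Real.sq_sqrt (abs_nonneg x)⟩
  obtain ⟨M, hM, hMm⟩ : ∃ M, 0 < M ∧ M ^ 2 = |m| :=
    ⟨√|m|, by positivity, Real.sq_sqrt (abs_nonneg m)⟩
  obtain ⟨R, hR, rfl⟩ : ∃ R, 0 < R ∧ R ^ 2 = r := ⟨√r, by positivity, Real.sq_sqrt hr.le⟩
  rw [sqrtKernel, sqrtKernel, ← hXx, ← hMm, Real.sqrt_sq hX.le, Real.sqrt_sq hM.le]
  rw [← hXx] at hxr
  rw [← hMm] at hmr
  have hXR : X ≤ R := (pow_le_pow_iff_left₀ hX.le hR.le two_ne_zero).1 hxr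
  have hMR : M ≤ R := (pow_le_pow_iff_left₀ hM.le hR.le two_ne_zero).1 hmr
  have am_gm : 0 ≤ (R * (1 - M * R)) ^ 2 := sq_nonneg _
  have key : X * (1 + X ^ 2) * (M * (1 + M ^ 2)) ≤ 2 * (R ^ 2 * (1 + M ^ 2 * R ^ 2)) :=
    calc X * (1 + X ^ 2) * (M * (1 + M ^ 2))
        = X * M + M * X ^ 3 + X * M * M ^ 2 + M ^ 2 * (X ^ 3 * M) := by ring
      _ ≤ R * R + M * R ^ 3 + R * M * R ^ 2 + M ^ 2 * (R ^ 3 * R) := by gcongr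
      _ ≤ 2 * (R ^ 2 * (1 + M ^ 2 * R ^ 2)) := by linarith
  calc (R ^ 2 * (1 + M ^ 2 * R ^ 2))⁻¹
      = 2 * (2 * (R ^ 2 * (1 + M ^ 2 * R ^ 2)))⁻¹ := by field_simp
    _ ≤ 2 * (X * (1 + X ^ 2) * (M * (1 + M ^ 2)))⁻¹ := by gcongr
    _ = 2 * ((X * (1 + X ^ 2))⁻¹ * (M * (1 + M ^ 2))⁻¹) := by rw [mul_inv]

lemma inv_norm_mul_one_add_abs_im_mul_norm_le {z w : ℂ} (hre : z.re ≠ w.re) (him : z.im ≠ w.im)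
    (hz : z.im ≠ 0) :
    (‖z - w‖ * (1 + |z.im| * ‖z - w‖))⁻¹ ≤
      2 * (sqrtKernel (z.re - w.re) * (sqrtKernel z.im + sqrtKernel (z.im - w.im))) := by
  have re_le : |z.re - w.re| ≤ ‖z - w‖ := by simpa using abs_re_le_norm (z - w)
  have im_le : |z.im - w.im| ≤ ‖z - w‖ := by simpa using abs_im_le_norm (z - w)
  have norm_pos : 0 < ‖z - w‖ := (abs_pos.2 (sub_ne_zero.2 hre)).trans_le re_le
  have nonneg := sqrtKernel_nonneg
  rcases le_total |z.im| ‖z - w‖ with h | h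
  · refine (inv_mul_one_add_mul_le_sqrtKernel (sub_ne_zero.2 hre) hz re_le h).trans ?_
    gcongr
    · exact nonneg _
    · exact le_add_of_nonneg_right (nonneg _)
  · have im_sub_le : |z.im - w.im| ≤ |z.im| := im_le.trans h
    calc (‖z - w‖ * (1 + |z.im| * ‖z - w‖))⁻¹
        ≤ (‖z - w‖ * (1 + |z.im - w.im| * ‖z - w‖))⁻¹ := by gcongr
      _ ≤ 2 * (sqrtKernel (z.re - w.re) * sqrtKernel (z.im - w.im)) :=
          inv_mul_one_add_mul_le_sqrtKernel (sub_ne_zero.2 hre) (sub_ne_zero.2 him) re_le im_le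
      _ ≤ _ := by
          gcongr
          · exact nonneg _
          · exact le_add_of_nonneg_left (nonneg _)

end Kernel

section ComplexVolume

@[fun_prop]
lemma measurable_complex_mk {α : Type*} [MeasurableSpace α] {f g : α → ℝ} (hf : Measurable f)
    (hg : Measurable g) : Measurable fun a => (⟨f a, g a⟩ : ℂ) :=
  measurableEquivRealProd.symm.measurable.comp (hf.prodMk hg)

lemma lintegral_complex_eq_lintegral_lintegral {F : ℂ → ℝ≥0∞} (hF : Measurable F) :
    ∫⁻ z, F z = ∫⁻ v : ℝ, ∫⁻ u : ℝ, F ⟨u, v⟩ := by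
  rw [← volume_preserving_equiv_real_prod.symm.lintegral_comp hF, Measure.volume_eq_prod]
  exact lintegral_prod_symm _ (by fun_prop)

lemma lintegral_complex_re_mul_im {f g : ℝ → ℝ≥0∞} (hf : AEMeasurable f) (hg : AEMeasurable g) :
    ∫⁻ z : ℂ, f z.re * g z.im = (∫⁻ u, f u) * ∫⁻ v, g v := by
  rw [← volume_preserving_equiv_real_prod.symm.lintegral_comp_emb
    measurableEquivRealProd.symm.measurableEmbedding, Measure.volume_eq_prod]
  exact lintegral_prod_mul hf hg

lemma quasiMeasurePreserving_re : Measure.QuasiMeasurePreserving Complex.re :=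
  Measure.quasiMeasurePreserving_fst.comp
    volume_preserving_equiv_real_prod.quasiMeasurePreserving

lemma quasiMeasurePreserving_im : Measure.QuasiMeasurePreserving Complex.im :=
  Measure.quasiMeasurePreserving_snd.comp
    volume_preserving_equiv_real_prod.quasiMeasurePreserving

lemma ae_re_ne (c : ℝ) : ∀ᵐ z : ℂ, z.re ≠ c :=
  quasiMeasurePreserving_re.ae (Measure.ae_ne volume c)

lemma ae_im_ne (c : ℝ) : ∀ᵐ z : ℂ, z.im ≠ c :=
  quasiMeasurePreserving_im.ae (Measure.ae_ne volume c)

end ComplexVolume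

section CauchyTransform

lemma lintegral_inv_norm_mul_one_add_le (w : ℂ) :
    ∫⁻ z : ℂ, ENNReal.ofReal (‖z - w‖ * (1 + |z.im| * ‖z - w‖))⁻¹ ≤
      ENNReal.ofReal (16 * Real.pi ^ 2) := by
  let k (c t : ℝ) : ℝ≥0∞ := ENNReal.ofReal (sqrtKernel (t - c))
  have hk (c : ℝ) : Measurable (k c) := by fun_prop
  have lintegral_k (c : ℝ) : ∫⁻ t, k c t = ENNReal.ofReal (2 * Real.pi) := by
    rw [← lintegral_sqrtKernel]
    exact lintegral_sub_right_eq_self (fun t => ENNReal.ofReal (sqrtKernel t)) c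
  calc ∫⁻ z : ℂ, ENNReal.ofReal (‖z - w‖ * (1 + |z.im| * ‖z - w‖))⁻¹
      ≤ ∫⁻ z : ℂ, 2 * k w.re z.re * (k 0 z.im + k w.im z.im) := by
        refine lintegral_mono_ae ?_
        filter_upwards [ae_re_ne w.re, ae_im_ne w.im, ae_im_ne 0] with z hre him hz
        refine (ENNReal.ofReal_le_ofReal
          (inv_norm_mul_one_add_abs_im_mul_norm_le hre him hz)).trans_eq ?_
        simp only [k, sub_zero, ENNReal.ofReal_mul, sqrtKernel_nonneg, ENNReal.ofReal_add,
          zero_le_two, ENNReal.ofReal_ofNat, mul_assoc]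
    _ = 2 * ENNReal.ofReal (2 * Real.pi) *
          (ENNReal.ofReal (2 * Real.pi) + ENNReal.ofReal (2 * Real.pi)) := by
        rw [lintegral_complex_re_mul_im (f := fun u => 2 * k w.re u)
          (g := fun v => k 0 v + k w.im v) (by fun_prop) (by fun_prop),
          lintegral_const_mul _ (hk _), lintegral_add_left (hk _)]
        simp only [lintegral_k]
    _ = ENNReal.ofReal (16 * Real.pi ^ 2) := by
        rw [← ENNReal.ofReal_add (by positivity) (by positivity), ← ENNReal.ofReal_ofNat 2,
          ← ENNReal.ofReal_mul (by positivity), ← ENNReal.ofReal_mul (by positivity)]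
        congr 1
        ring

lemma div_le_sq_mul_add_inv {a r t v : ℝ} (ha : 0 ≤ a) (hat : a ≤ t) (ht : 0 < t) (hr : 0 < r)
    (hv : 0 ≤ v) :
    a / r ≤ t⁻¹ * (v * a ^ 2) + t * (r * (1 + v * r))⁻¹ := by
  have key : t * a * (1 + v * r) ≤ a * (a * v * r) + (a * v * r) ^ 2 + t ^ 2 := by
    have square : 0 ≤ (a * v * r - (t - a) / 2) ^ 2 := sq_nonneg _
    have remainder : 0 ≤ (t - a) * (3 * t + a) := mul_nonneg (by linarith) (by linarith)
    linarith
  calc a / r = t * a * (1 + v * r) / (t * r * (1 + v * r)) := by field_simp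
    _ ≤ (a * (a * v * r) + (a * v * r) ^ 2 + t ^ 2) / (t * r * (1 + v * r)) := by gcongr
    _ = t⁻¹ * (v * a ^ 2) + t * (r * (1 + v * r))⁻¹ := by field_simp

variable {E : Type*} [NormedAddCommGroup E]

lemma lintegral_enorm_div_enorm_sub_le {f : ℂ → E} {t : ℝ≥0} (ht : 0 < t)
    (hf : ∀ᵐ z, ‖f z‖ₑ ≤ t) (w : ℂ) :
    ∫⁻ z, ‖f z‖ₑ / ‖z - w‖ₑ ≤
      (t : ℝ≥0∞)⁻¹ * (∫⁻ z, ENNReal.ofReal |z.im| * ‖f z‖ₑ ^ 2)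
        + t * ENNReal.ofReal (16 * Real.pi ^ 2) := by
  let K (z : ℂ) : ℝ≥0∞ := ENNReal.ofReal (‖z - w‖ * (1 + |z.im| * ‖z - w‖))⁻¹
  have hK : Measurable K := by fun_prop
  calc ∫⁻ z, ‖f z‖ₑ / ‖z - w‖ₑ
      ≤ ∫⁻ z, ((t : ℝ≥0∞)⁻¹ * (ENNReal.ofReal |z.im| * ‖f z‖ₑ ^ 2) + t * K z) := by
        refine lintegral_mono_ae ?_
        filter_upwards [hf, ae_re_ne w.re] with z hfz hre
        have norm_pos : 0 < ‖z - w‖ := norm_pos_iff.2 (sub_ne_zero.2 (ne_of_apply_ne re hre))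
        have pointwise := ENNReal.ofReal_le_ofReal <| div_le_sq_mul_add_inv (norm_nonneg (f z))
          (by exact_mod_cast hfz) (NNReal.coe_pos.2 ht) norm_pos (abs_nonneg z.im)
        rwa [ENNReal.ofReal_div_of_pos norm_pos, ENNReal.ofReal_add (by positivity) (by positivity),
          ENNReal.ofReal_mul (by positivity), ENNReal.ofReal_mul (by positivity),
          ENNReal.ofReal_mul (by positivity), ENNReal.ofReal_inv_of_pos (by positivity),
          ENNReal.ofReal_pow (norm_nonneg _), ofReal_norm, ofReal_norm,
          ENNReal.ofReal_coe_nnreal] at pointwise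
    _ = (t : ℝ≥0∞)⁻¹ * (∫⁻ z, ENNReal.ofReal |z.im| * ‖f z‖ₑ ^ 2) + t * ∫⁻ z, K z := by
        rw [lintegral_add_right _ (by fun_prop), lintegral_const_mul' _ _ (by simp [ht.ne']),
          lintegral_const_mul _ hK]
    _ ≤ _ := by gcongr; exact lintegral_inv_norm_mul_one_add_le w

end CauchyTransform

section ChangeOfVariables

lemma zeta_eq_mk (p : ℝ × ℝ) : zeta p = ⟨(2 * p.1)⁻¹ * p.2, -Real.pi * p.1⟩ := by
  apply Complex.ext <;> simp [zeta, ← ofReal_ofNat, ← ofReal_mul, div_eq_inv_mul, ← ofReal_inv]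

@[fun_prop]
lemma measurable_zeta : Measurable zeta := by
  unfold zeta; fun_prop

/-- The Jacobian `2|Im ζ|/π²` of the inverse of `zeta`, as a density on the `ζ`-plane. -/
def zetaDensity (z : ℂ) : ℝ≥0∞ := ENNReal.ofReal (2 / Real.pi ^ 2 * |z.im|)

@[fun_prop]
lemma measurable_zetaDensity : Measurable zetaDensity := by
  unfold zetaDensity; fun_prop

lemma zetaDensity_ne_zero {z : ℂ} (hz : z.im ≠ 0) : zetaDensity z ≠ 0 :=
  (ENNReal.ofReal_pos.2 (by positivity)).ne'

lemma ofReal_abs_im_eq_mul_zetaDensity (z : ℂ) :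
    ENNReal.ofReal |z.im| = ENNReal.ofReal (Real.pi ^ 2 / 2) * zetaDensity z := by
  rw [zetaDensity, ← ENNReal.ofReal_mul (by positivity)]
  congr 1
  field_simp

lemma lintegral_comp_zeta_right (F : ℂ → ℝ≥0∞) {ξ : ℝ} (hξ : ξ ≠ 0) :
    ∫⁻ η, F (zeta (ξ, η)) =
      ENNReal.ofReal (2 / Real.pi * |-Real.pi * ξ|) * ∫⁻ u, F ⟨u, -Real.pi * ξ⟩ := by
  simp only [zeta_eq_mk]
  rw [lintegral_comp_mul_left (by positivity) fun u => F ⟨u, -Real.pi * ξ⟩, inv_inv]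
  congr 2
  rw [abs_mul, abs_mul, abs_neg, abs_two, abs_of_pos Real.pi_pos]
  field_simp

lemma lintegral_comp_zeta {F : ℂ → ℝ≥0∞} (hF : Measurable F) :
    ∫⁻ p, F (zeta p) = ∫⁻ z, zetaDensity z * F z := by
  let G (v : ℝ) : ℝ≥0∞ := ENNReal.ofReal (2 / Real.pi * |v|) * ∫⁻ u, F ⟨u, v⟩
  have density (u v : ℝ) : zetaDensity ⟨u, v⟩ =
      ENNReal.ofReal |(-Real.pi)⁻¹| * ENNReal.ofReal (2 / Real.pi * |v|) := by
    rw [zetaDensity, ← ENNReal.ofReal_mul (abs_nonneg _), abs_inv, abs_neg,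
      abs_of_pos Real.pi_pos]
    congr 1
    field_simp
  calc ∫⁻ p, F (zeta p)
      = ∫⁻ ξ, ∫⁻ η, F (zeta (ξ, η)) := lintegral_prod _ (by fun_prop)
    _ = ∫⁻ ξ, G (-Real.pi * ξ) :=
        lintegral_congr_ae ((Measure.ae_ne volume 0).mono fun _ => lintegral_comp_zeta_right F)
    _ = ENNReal.ofReal |(-Real.pi)⁻¹| * ∫⁻ v, G v :=
        lintegral_comp_mul_left (neg_ne_zero.2 Real.pi_ne_zero) G
    _ = ∫⁻ v, ∫⁻ u, zetaDensity ⟨u, v⟩ * F ⟨u, v⟩ := by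
        simp only [density, mul_assoc, G, lintegral_const_mul' _ _ ENNReal.ofReal_ne_top]
    _ = ∫⁻ z, zetaDensity z * F z :=
        (lintegral_complex_eq_lintegral_lintegral (measurable_zetaDensity.mul hF)).symm

lemma map_zeta_volume : volume.map zeta = volume.withDensity zetaDensity := by
  refine Measure.ext_of_lintegral _ fun F hF => ?_
  rw [lintegral_map hF measurable_zeta, lintegral_comp_zeta hF,
    lintegral_withDensity_eq_lintegral_mul _ measurable_zetaDensity hF]
  rfl

lemma volume_absolutelyContinuous_map_zeta : (volume : Measure ℂ) ≪ volume.map zeta := by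
  rw [map_zeta_volume]
  exact withDensity_absolutelyContinuous' (by fun_prop)
    ((ae_im_ne 0).mono fun _ => zetaDensity_ne_zero)

variable {E : Type*} [NormedAddCommGroup E] {f : ℂ → E}

lemma eLpNorm_comp_zeta (hf : AEStronglyMeasurable f) (p : ℝ≥0∞) :
    eLpNorm (f ∘ zeta) p volume = eLpNorm f p (volume.map zeta) := by
  refine (eLpNorm_map_measure ?_ (by fun_prop)).symm
  rw [map_zeta_volume]
  exact hf.mono_ac (withDensity_absolutelyContinuous _ _)

lemma ae_enorm_le_eLpNorm_top_comp_zeta (hf : AEStronglyMeasurable f) :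
    ∀ᵐ z, ‖f z‖ₑ ≤ eLpNorm (f ∘ zeta) ⊤ volume := by
  rw [eLpNorm_comp_zeta hf, eLpNorm_exponent_top]
  exact volume_absolutelyContinuous_map_zeta.ae_le ae_le_eLpNormEssSup

lemma lintegral_abs_im_mul_enorm_sq (hf : AEStronglyMeasurable f) :
    ∫⁻ z, ENNReal.ofReal |z.im| * ‖f z‖ₑ ^ 2 =
      ENNReal.ofReal (Real.pi ^ 2 / 2) * eLpNorm (f ∘ zeta) 2 volume ^ 2 := by
  have sq_eLpNorm : eLpNorm f 2 (volume.map zeta) ^ 2 = ∫⁻ z, ‖f z‖ₑ ^ 2 ∂volume.map zeta := by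
    simpa using eLpNorm_nnreal_pow_eq_lintegral (f := f) (p := 2) two_ne_zero
  rw [eLpNorm_comp_zeta hf, sq_eLpNorm, map_zeta_volume,
    lintegral_withDensity_eq_lintegral_mul₀ (by fun_prop) (by fun_prop),
    ← lintegral_const_mul' _ _ ENNReal.ofReal_ne_top]
  simp only [ofReal_abs_im_eq_mul_zetaDensity, mul_assoc, Pi.mul_apply]

lemma lintegral_enorm_div_enorm_sub_le_eLpNorm (hf : AEStronglyMeasurable f) (w : ℂ) :
    ∫⁻ z, ‖f z‖ₑ / ‖z - w‖ₑ ≤ ENNReal.ofReal (33 / 2 * Real.pi ^ 2) *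
      (eLpNorm (f ∘ zeta) 2 volume + eLpNorm (f ∘ zeta) ⊤ volume) := by
  refine le_const_mul_of_forall_nnreal_lt (ENNReal.ofReal_pos.2 (by positivity)).ne'
    ENNReal.ofReal_ne_top fun t ht => ?_
  have t_pos : 0 < t := ENNReal.coe_pos.1 (bot_le.trans_lt ht)
  have f_le : ∀ᵐ z, ‖f z‖ₑ ≤ t :=
    (ae_enorm_le_eLpNorm_top_comp_zeta hf).mono fun _ h => h.trans (le_add_self.trans ht.le)
  have l2_le : eLpNorm (f ∘ zeta) 2 volume ≤ t := le_self_add.trans ht.le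
  calc ∫⁻ z, ‖f z‖ₑ / ‖z - w‖ₑ
      ≤ (t : ℝ≥0∞)⁻¹ * (ENNReal.ofReal (Real.pi ^ 2 / 2) * eLpNorm (f ∘ zeta) 2 volume ^ 2)
          + t * ENNReal.ofReal (16 * Real.pi ^ 2) :=
        lintegral_abs_im_mul_enorm_sq hf ▸ lintegral_enorm_div_enorm_sub_le t_pos f_le w
    _ ≤ (t : ℝ≥0∞)⁻¹ * (ENNReal.ofReal (Real.pi ^ 2 / 2) * t ^ 2)
          + t * ENNReal.ofReal (16 * Real.pi ^ 2) := by gcongr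
    _ = (ENNReal.ofReal (Real.pi ^ 2 / 2) + ENNReal.ofReal (16 * Real.pi ^ 2)) * t := by
        rw [sq (t : ℝ≥0∞), mul_left_comm,
          ENNReal.inv_mul_cancel_left (by simp [t_pos.ne']) ENNReal.coe_ne_top, add_mul,
          mul_comm (t : ℝ≥0∞)]
    _ = ENNReal.ofReal (33 / 2 * Real.pi ^ 2) * t := by
        rw [← ENNReal.ofReal_add (by positivity) (by positivity)]
        congr 2
        ring

end ChangeOfVariables

lemma enorm_exp_phase (x : ℝ × ℝ × ℝ) (ζ : ℂ) : ‖exp (phase x ζ)‖ₑ = 1 := by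
  have phase_re : (phase x ζ).re = 0 := by simp [phase, ← map_pow]
  rw [← ofReal_norm, norm_exp, phase_re, Real.exp_zero, ENNReal.ofReal_one]

/-- The basic estimate for the Cauchy integral of the continuous scattering operator:
`∬ |s_c(ζ)|/|ζ−λ| ≤ C(‖S‖_{L²}+‖S‖_{L∞})`, and hence
`|∬ s_c(ζ)e^{phase}φ(ζ̄)(ζ−λ)⁻¹| ≤ C‖φ‖_{L∞}(‖S‖_{L²}+‖S‖_{L∞})`. -/
theorem cauchy_integral_estimate :
    ∃ C : ℝ, 0 < C ∧ ∀ sc : ℂ → ℂ, Measurable sc → ∀ lam : ℂ,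
      ((∫⁻ ζ : ℂ, (‖sc ζ‖₊ : ℝ≥0∞) / (‖ζ - lam‖₊ : ℝ≥0∞))
          ≤ ENNReal.ofReal C
            * (eLpNorm (Sfun sc) 2 volume + eLpNorm (Sfun sc) ⊤ volume))
      ∧ ∀ φ : ℂ → ℂ, Measurable φ → ∀ B : ℝ, (∀ ζ : ℂ, ‖φ ζ‖ ≤ B) →
          ∀ x : ℝ × ℝ × ℝ,
            ENNReal.ofReal
                ‖∫ ζ : ℂ, sc ζ * Complex.exp (phase x ζ)
                    * φ ((starRingEnd ℂ) ζ) / (ζ - lam)‖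
              ≤ ENNReal.ofReal (C * B)
                * (eLpNorm (Sfun sc) 2 volume + eLpNorm (Sfun sc) ⊤ volume) := by
  refine ⟨33 / 2 * Real.pi ^ 2, by positivity, fun sc hsc lam => ?_⟩
  have modulus_estimate :=
    lintegral_enorm_div_enorm_sub_le_eLpNorm hsc.aestronglyMeasurable lam
  refine ⟨modulus_estimate, fun φ _ B hB x => ?_⟩
  have integrand_le (ζ : ℂ) :
      ‖sc ζ * exp (phase x ζ) * φ ((starRingEnd ℂ) ζ) / (ζ - lam)‖ₑ ≤
        ENNReal.ofReal B * (‖sc ζ‖ₑ / ‖ζ - lam‖ₑ) := by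
    have hφ : ‖φ ((starRingEnd ℂ) ζ)‖ₑ ≤ ENNReal.ofReal B :=
      ofReal_norm (φ _) ▸ ENNReal.ofReal_le_ofReal (hB _)
    refine (enorm_div_le_enorm_div_enorm _ _).trans ?_
    rw [enorm_mul, enorm_mul, enorm_exp_phase, mul_one, mul_comm, mul_div_assoc]
    gcongr
  calc ENNReal.ofReal ‖∫ ζ, sc ζ * exp (phase x ζ) * φ ((starRingEnd ℂ) ζ) / (ζ - lam)‖
      ≤ ∫⁻ ζ, ‖sc ζ * exp (phase x ζ) * φ ((starRingEnd ℂ) ζ) / (ζ - lam)‖ₑ :=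
        (ofReal_norm _).trans_le (enorm_integral_le_lintegral_enorm _)
    _ ≤ ENNReal.ofReal B * ∫⁻ ζ, ‖sc ζ‖ₑ / ‖ζ - lam‖ₑ :=
        (lintegral_mono integrand_le).trans_eq (lintegral_const_mul' _ _ ENNReal.ofReal_ne_top)
    _ ≤ _ := by
        rw [mul_comm (33 / 2 * _), ENNReal.ofReal_mul' (by positivity), mul_assoc]
        exact mul_le_mul_right modulus_estimate _
end
end
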